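/- arXiv:1210.3146 — 2 statements merged into one kernel-verified Lean document; each statement's English description precedes it below -/
import Mathlib

section
/- Let w be a privileged word and let u be a border of w. Then u is privileged. -/
/-- Number of occurrences of `u` as a factor of `w` (positions are 0-indexed). -/
noncomputable def occCount {A : Type*} (u w : List A) : ℕ :=
  Set.ncard {i : ℕ | i + u.length ≤ w.length ∧ (w.drop i).take u.length = u}

/-- `v` is a complete first return to `u`: `u` is a prefix and a suffix of `v`,
and `u` has exactly two occurrences in `v`. -/
def IsCompleteFirstReturn {A : Type*} (v u : List A) : Prop :=
  u <+: v ∧ u <:+ v ∧ occCount u v = 2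

/-- Privileged words: the empty word and the single letters are privileged, and a word of
length at least 2 is privileged if it is a complete first return to a shorter privileged word. -/
inductive Privileged {A : Type*} : List A → Prop where
  | nil : Privileged ([] : List A)
  | single (a : A) : Privileged [a]
  | ret (w u : List A) : 2 ≤ w.length → u.length < w.length → Privileged u →
      IsCompleteFirstReturn w u → Privileged w

/-- A complete return word: a complete first return to some word
(the empty word counted by convention; letters are complete first returns to the empty word). -/
def IsCompleteReturnWord {A : Type*} (v : List A) : Prop :=
  v = [] ∨ ∃ u : List A, IsCompleteFirstReturn v u

/-- Position `i` of `w` (1-based, `1 ≤ i ≤ |w|`) introduces the factor `u`: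
`u` occurs in `w` ending at position `i` and `u` occurs exactly once in the prefix `w[1,i]`. -/
def Introduces {A : Type*} (w : List A) (i : ℕ) (u : List A) : Prop :=
  1 ≤ i ∧ i ≤ w.length ∧ u <:+ w.take i ∧ occCount u (w.take i) = 1

/-- A finite word is rich if it has exactly `|w| + 1` distinct palindromic factors. -/
noncomputable def RichWord {A : Type*} (w : List A) : Prop :=
  Set.ncard {u : List A | u <:+: w ∧ u.reverse = u} = w.length + 1

/-- `u` is a (finite) factor of the infinite word `w`. -/
def IsFactorInf {A : Type*} (w : ℕ → A) (u : List A) : Prop :=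
  ∃ i : ℕ, u = (List.range u.length).map fun k => w (i + k)

/-- A Q-property of finite words. -/
structure IsQProperty {A : Type*} (Q : List A → Prop) : Prop where
  q_nil : Q []
  q_single : ∀ a : A, Q [a]
  ends_at_every_position : ∀ (w : List A) (i : ℕ), 1 ≤ i → i ≤ w.length →
    ∃ u : List A, u ≠ [] ∧ u <:+ w.take i ∧ Q u
  introduces_at_most_one : ∀ (w : List A) (i : ℕ) (u v : List A),
    Introduces w i u → Introduces w i v → Q u → Q v → u = v

/-- Q-complexity of an infinite word: the number of distinct factors of length `n`
having property `Q`. -/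
noncomputable def qComplexityInf {A : Type*} (w : ℕ → A) (Q : List A → Prop) (n : ℕ) : ℕ :=
  Set.ncard {u : List A | IsFactorInf w u ∧ Q u ∧ u.length = n}

/-- Privileged complexity of an infinite word. -/
noncomputable def privComplexityInf {A : Type*} (w : ℕ → A) (n : ℕ) : ℕ :=
  Set.ncard {u : List A | IsFactorInf w u ∧ Privileged u ∧ u.length = n}

/-- Palindromic complexity of an infinite word. -/
noncomputable def palComplexityInf {A : Type*} (w : ℕ → A) (n : ℕ) : ℕ :=
  Set.ncard {u : List A | IsFactorInf w u ∧ u.reverse = u ∧ u.length = n}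

/-- An infinite word is ultimately periodic if it is of the form `u v v v ⋯`
with `v` nonempty. -/
def UltimatelyPeriodic {A : Type*} (w : ℕ → A) : Prop :=
  ∃ u v : List A, v ≠ [] ∧ ∀ n : ℕ, w n =
    if n < u.length then u.getD n (w 0)
    else v.getD ((n - u.length) % v.length) (w 0)

/-- An infinite word is Sturmian if it has exactly `n + 1` distinct factors of
length `n` for every `n`. -/
def Sturmian {A : Type*} (w : ℕ → A) : Prop :=
  ∀ n : ℕ, Set.ncard {u : List A | IsFactorInf w u ∧ u.length = n} = n + 1

/-- A finite binary word is balanced: its set of factors is balanced. -/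
def BalancedWord (x : List Bool) : Prop :=
  ∀ u v : List Bool, u <:+: x → v <:+: x → u.length = v.length →
    ((u.count true : ℤ) - (v.count true : ℤ)).natAbs ≤ 1

/-- `u` is a right special factor of the infinite word `w`. -/
def RightSpecial {A : Type*} (w : ℕ → A) (u : List A) : Prop :=
  ∃ a b : A, a ≠ b ∧ IsFactorInf w (u ++ [a]) ∧ IsFactorInf w (u ++ [b])

/-- The Thue-Morse word: the `n`-th letter is the parity of the number of ones in the
binary expansion of `n` (`false` = 0, `true` = 1). -/
def thueMorse (n : ℕ) : Bool := (Nat.digits 2 n).count 1 % 2 == 1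

/-!
Let `w` be a complete first return to `v`, and suppose a border `u` of `w` were longer
than `v`. Then `v` would be a border of `u`, so `v` would occur in `w` as a prefix, as the suffix of
the prefix `u`, and as a suffix: three occurrences instead of two. Hence every border of `w`
is `v` itself or a border of `v`, and induction on privileged words applies.
-/

section

variable {A : Type*} {u v w : List A}

/-- The occurrences of `u` as a factor of `w`, encoded by their 0-indexed starting positions; this
is the set counted by `occCount`. -/
def occurrences (u w : List A) : Set ℕ :=
  {i | i + u.length ≤ w.length ∧ (w.drop i).take u.length = u}

theorem length_mem_occurrences (s u t : List A) : s.length ∈ occurrences u (s ++ u ++ t) := by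
  simp [occurrences]

theorem finite_occurrences (u w : List A) : (occurrences u w).Finite :=
  (Set.finite_Iic w.length).subset fun _ hi => (Nat.le_add_right _ _).trans hi.1

theorem occurrences_subset_of_prefix (v : List A) (huw : u <+: w) :
    occurrences v u ⊆ occurrences v w := by
  rintro i ⟨hi, hv⟩
  have huw_length := huw.length_le
  obtain ⟨t, rfl⟩ := huw
  refine ⟨hi.trans huw_length, ?_⟩
  rwa [List.drop_append_of_le_length (by omega),
    List.take_append_of_le_length (by rw [List.length_drop]; omega)]

theorem occCount_pos (huw : u <:+: w) : 0 < occCount u w := by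
  obtain ⟨s, t, rfl⟩ := huw
  exact (Set.ncard_pos (finite_occurrences _ _)).mpr ⟨_, length_mem_occurrences s u t⟩

theorem occCount_lt_of_prefix_of_suffix (huw : u <+: w) (hne : u ≠ w) (hvw : v <:+ w) :
    occCount v u < occCount v w := by
  have hlt : u.length < w.length :=
    huw.length_le.lt_of_ne fun h => hne (huw.eq_of_length h)
  obtain ⟨s, rfl⟩ := hvw
  have hmem : s.length ∈ occurrences v (s ++ v) := by
    simpa only [List.append_nil] using length_mem_occurrences s v []
  have hnotMem : s.length ∉ occurrences v u := fun h =>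
    (h.1.trans_lt hlt).ne List.length_append.symm
  exact Set.ncard_lt_ncard
    (Set.ssubset_iff_exists.mpr ⟨occurrences_subset_of_prefix v huw, _, hmem, hnotMem⟩)
    (finite_occurrences _ _)

theorem IsCompleteFirstReturn.length_le_of_border (h : IsCompleteFirstReturn w v)
    (hpre : u <+: w) (hsuf : u <:+ w) (hne : u ≠ w) : u.length ≤ v.length := by
  obtain ⟨hvpre, hvsuf, hcount⟩ := h
  by_contra! hlt
  have hvu : v <+: u := List.prefix_of_prefix_length_le hvpre hpre hlt.le
  have hvu' : v <:+ u := List.suffix_of_suffix_length_le hvsuf hsuf hlt.le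
  have hvu_ne : v ≠ u := fun heq => hlt.ne (congrArg List.length heq)
  have htwo_lt : 2 < occCount v w :=
    calc
      2 ≤ occCount v v + 1 := Nat.succ_le_succ (occCount_pos List.infix_rfl)
      _ ≤ occCount v u := occCount_lt_of_prefix_of_suffix hvu hvu_ne hvu'
      _ < occCount v w := occCount_lt_of_prefix_of_suffix hpre hne hvsuf
  exact htwo_lt.ne' hcount

end

/-- Every border of a privileged word is privileged. -/
theorem border_of_privileged_is_privileged {A : Type*} (w u : List A)
    (hw : Privileged w) (hpre : u <+: w) (hsuf : u <:+ w) (hproper : u ≠ w) :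
    Privileged u := by
  induction hw generalizing u with
  | nil => exact absurd (List.prefix_nil.mp hpre) hproper
  | single a =>
    obtain h | h := (List.prefix_concat_iff (l₂ := [])).mp hpre
    · exact absurd h hproper
    · rw [List.prefix_nil.mp h]
      exact .nil
  | ret w v _ _ hv hret ih =>
    have hle : u.length ≤ v.length := hret.length_le_of_border hpre hsuf hproper
    have huv : u <+: v := List.prefix_of_prefix_length_le hpre hret.1 hle
    have huv' : u <:+ v := List.suffix_of_suffix_length_le hsuf hret.2.1 hle
    obtain rfl | hne := eq_or_ne u v
    · exact hv
    · exact ih u huv huv' hne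
end

section
/- Every Sturmian word is rich. -/
/-!
A Sturmian word is not ultimately periodic and has at most one right special factor of each length.
Hence a factor cannot occur twice unless a right special factor of the same length occurs in
between: otherwise the path between the two occurrences would be repeated forever. Together with
the Morse–Hedlund bound, which makes every factor recurrent, this gives in turn:

* if `u` is a palindrome, `aua` and `bub` are not both factors for `a ≠ b`: one of `au` and `bu`,
  say `bu`, is not right special, so that only `au` can be the right special factor of its length.
  As `u` is a palindrome, none of the `|u| + 2` factors of length `|u| + 1` which start inside an
  occurrence of `bub` is `au`, so one of the `|u| + 1` other factors of that length occurs twice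
  among them;
* the set of factors is closed under reversal;
* a complete first return `x a y b xᴿ` to a palindrome `u` with `a ≠ b` is impossible. If `u` is not
  right special, it is followed and preceded by a single letter `c`, so that `c x a y b xᴿ c` is a
  complete first return to `cuc`. When `u` is right special, `u = x`, and both `aua` and `bub` are
  factors.

So complete first returns to palindromes are palindromes. If `p` is the longest palindromic suffix
of `xa`, then `p` does not occur in `x`, as otherwise the complete first return to `p` at the end of
`xa` would be a longer palindromic suffix. Every letter thus contributes exactly one new palindrome.
-/

section

variable {A : Type*} {w : ℕ → A} {u v : List A}

/-- The factor of length `n` of the infinite word `w` starting at position `i`. That `u` occurs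
in `w` at position `i` is expressed as `factorAt w i u.length = u`. -/
def factorAt (w : ℕ → A) (i n : ℕ) : List A := (List.range n).map fun k => w (i + k)

/-- The set of factors of length `n` of the infinite word `w`; its cardinality is the factor
complexity of `w` at `n`. -/
def factorsOfLength (w : ℕ → A) (n : ℕ) : Set (List A) := {u | IsFactorInf w u ∧ u.length = n}

@[simp]
theorem length_factorAt (w : ℕ → A) (i n : ℕ) : (factorAt w i n).length = n := by
  simp [factorAt]

theorem factorAt_add (w : ℕ → A) (i m n : ℕ) :
    factorAt w i (m + n) = factorAt w i m ++ factorAt w (i + m) n := by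
  simp [factorAt, List.range_add, Nat.add_assoc]

theorem factorAt_one (w : ℕ → A) (i : ℕ) : factorAt w i 1 = [w i] := by
  simp [factorAt]

theorem factorAt_succ (w : ℕ → A) (i n : ℕ) :
    factorAt w i (n + 1) = factorAt w i n ++ [w (i + n)] := by
  rw [factorAt_add, factorAt_one]

theorem factorAt_succ' (w : ℕ → A) (i n : ℕ) :
    factorAt w i (n + 1) = w i :: factorAt w (i + 1) n := by
  rw [Nat.add_comm, factorAt_add, factorAt_one, List.singleton_append]

theorem factorAt_shift (w : ℕ → A) (N i n : ℕ) :
    factorAt (fun k => w (N + k)) i n = factorAt w (N + i) n := by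
  simp [factorAt, Nat.add_assoc]

theorem factorAt_eq_cons_iff {i : ℕ} {a : A} :
    factorAt w i (a :: u).length = a :: u ↔ w i = a ∧ factorAt w (i + 1) u.length = u := by
  rw [List.length_cons, factorAt_succ', List.cons.injEq]

theorem factorAt_eq_append_iff {i : ℕ} :
    factorAt w i (u ++ v).length = u ++ v ↔
      factorAt w i u.length = u ∧ factorAt w (i + u.length) v.length = v := by
  rw [List.length_append, factorAt_add,
    List.append_eq_append_iff_of_size_eq_left (length_factorAt ..)]

theorem factorAt_prefix (w : ℕ → A) (i : ℕ) {m n : ℕ} (h : m ≤ n) :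
    factorAt w i m <+: factorAt w i n := by
  obtain ⟨k, rfl⟩ := Nat.exists_eq_add_of_le h
  exact ⟨_, (factorAt_add w i m k).symm⟩

theorem isFactorInf_iff : IsFactorInf w u ↔ ∃ i, factorAt w i u.length = u :=
  exists_congr fun _ => eq_comm

theorem isFactorInf_factorAt (w : ℕ → A) (i n : ℕ) : IsFactorInf w (factorAt w i n) :=
  isFactorInf_iff.2 ⟨i, by rw [length_factorAt]⟩

theorem factorsOfLength_eq_range (w : ℕ → A) (n : ℕ) :
    factorsOfLength w n = Set.range fun i => factorAt w i n := by
  ext u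
  constructor
  · rintro ⟨hu, rfl⟩
    exact isFactorInf_iff.1 hu
  · rintro ⟨i, rfl⟩
    exact ⟨isFactorInf_factorAt w i n, length_factorAt w i n⟩

theorem factorAt_mem_factorsOfLength (w : ℕ → A) (i n : ℕ) :
    factorAt w i n ∈ factorsOfLength w n :=
  ⟨isFactorInf_factorAt w i n, length_factorAt w i n⟩

theorem IsFactorInf.of_isInfix (hv : IsFactorInf w v) (h : u <:+: v) : IsFactorInf w u := by
  obtain ⟨s, t, rfl⟩ := h
  obtain ⟨i, hi⟩ := isFactorInf_iff.1 hv
  rw [factorAt_eq_append_iff, factorAt_eq_append_iff] at hi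
  exact isFactorInf_iff.2 ⟨_, hi.1.2⟩

theorem IsFactorInf.singleton_of_mem {a : A} (hu : IsFactorInf w u) (ha : a ∈ u) :
    IsFactorInf w [a] :=
  hu.of_isInfix ((List.singleton_infix_iff a u).2 ha)

theorem IsFactorInf.exists_append_singleton (hu : IsFactorInf w u) :
    ∃ a, IsFactorInf w (u ++ [a]) := by
  obtain ⟨i, hi⟩ := isFactorInf_iff.1 hu
  refine ⟨w (i + u.length), ?_⟩
  rw [← hi, length_factorAt, ← factorAt_succ]
  exact isFactorInf_factorAt w i _

theorem RightSpecial.isFactorInf (hu : RightSpecial w u) : IsFactorInf w u := by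
  obtain ⟨a, -, -, ha, -⟩ := hu
  exact ha.of_isInfix (List.prefix_append u [a]).isInfix

theorem RightSpecial.of_isSuffix (hv : RightSpecial w v) (h : u <:+ v) : RightSpecial w u := by
  obtain ⟨s, rfl⟩ := h
  obtain ⟨a, b, hab, ha, hb⟩ := hv
  have isInfix (c : A) : u ++ [c] <:+: s ++ u ++ [c] := ⟨s, [], by simp⟩
  exact ⟨a, b, hab, ha.of_isInfix (isInfix a), hb.of_isInfix (isInfix b)⟩

theorem apply_add_eq_of_not_rightSpecial {i j n : ℕ} (h : ¬RightSpecial w (factorAt w i n))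
    (hij : factorAt w i n = factorAt w j n) : w (i + n) = w (j + n) := by
  by_contra hne
  refine h ⟨w (i + n), w (j + n), hne, ?_, ?_⟩
  · rw [← factorAt_succ]
    exact isFactorInf_factorAt w i _
  · rw [hij, ← factorAt_succ]
    exact isFactorInf_factorAt w j _

theorem factorAt_succ_eq_of_not_rightSpecial {i j n : ℕ} (h : ¬RightSpecial w (factorAt w i n))
    (hij : factorAt w i n = factorAt w j n) : factorAt w (i + 1) n = factorAt w (j + 1) n := by
  have hext : factorAt w i (n + 1) = factorAt w j (n + 1) := by
    rw [factorAt_succ, factorAt_succ, hij, apply_add_eq_of_not_rightSpecial h hij]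
  rw [factorAt_succ', factorAt_succ'] at hext
  exact (List.cons.inj hext).2

theorem ultimatelyPeriodic_iff :
    UltimatelyPeriodic w ↔ ∃ N P, 0 < P ∧ ∀ k, w (N + (k + P)) = w (N + k) := by
  constructor
  · rintro ⟨u, v, hv, h⟩
    refine ⟨u.length, v.length, List.length_pos_iff.2 hv, fun k => ?_⟩
    rw [h, h (u.length + k), if_neg (by omega), if_neg (by omega), Nat.add_sub_cancel_left,
      Nat.add_sub_cancel_left, Nat.add_mod_right]
  · rintro ⟨N, P, hP, h⟩
    refine ⟨factorAt w 0 N, factorAt w N P, by simp [factorAt, hP.ne'], fun n => ?_⟩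
    have hmod : w (N + (n - N) % P) = w (N + (n - N)) :=
      Function.Periodic.map_mod_nat (f := fun k => w (N + k)) h (n - N)
    split_ifs with hn
    · rw [length_factorAt] at hn
      simp [factorAt, List.getD_eq_getElem?_getD, hn]
    · rw [length_factorAt, not_lt] at hn
      simp [factorAt, List.getD_eq_getElem?_getD, Nat.mod_lt _ hP, hmod, Nat.add_sub_of_le hn]

theorem UltimatelyPeriodic.of_shift {N : ℕ} (h : UltimatelyPeriodic fun k => w (N + k)) :
    UltimatelyPeriodic w := by
  obtain ⟨M, P, hP, hper⟩ := ultimatelyPeriodic_iff.1 h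
  exact ultimatelyPeriodic_iff.2 ⟨N + M, P, hP, fun k => by simpa [Nat.add_assoc] using hper k⟩

theorem UltimatelyPeriodic.exists_ncard_factorsOfLength_le (h : UltimatelyPeriodic w) :
    ∃ C, ∀ n, (factorsOfLength w n).ncard ≤ C := by
  obtain ⟨N, P, hP, hper⟩ := ultimatelyPeriodic_iff.1 h
  have hmod (k : ℕ) : w (N + k % P) = w (N + k) :=
    Function.Periodic.map_mod_nat (f := fun k => w (N + k)) hper k
  refine ⟨N + P, fun n => ?_⟩
  have hsub : factorsOfLength w n ⊆ (fun i => factorAt w i n) '' Set.Iio (N + P) := by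
    rw [factorsOfLength_eq_range]
    rintro _ ⟨i, rfl⟩
    rcases lt_or_ge i N with hi | hi
    · exact ⟨i, by simp; omega, rfl⟩
    obtain ⟨r, rfl⟩ := Nat.exists_eq_add_of_le hi
    refine ⟨N + r % P, by simpa using Nat.mod_lt r hP, List.map_congr_left fun k _ => ?_⟩
    rw [Nat.add_assoc, Nat.add_assoc, ← hmod, Nat.mod_add_mod, hmod]
  calc (factorsOfLength w n).ncard
      ≤ ((fun i => factorAt w i n) '' Set.Iio (N + P)).ncard :=
        Set.ncard_le_ncard hsub ((Set.finite_Iio _).image _)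
    _ ≤ (Set.Iio (N + P)).ncard := Set.ncard_image_le (Set.finite_Iio _)
    _ = N + P := by simp [Set.ncard_eq_toFinset_card']

/- In the Rauzy graph, a closed path through vertices of out-degree one can never be left. -/
theorem ultimatelyPeriodic_of_factorAt_eq {i j n : ℕ} (hij : i < j)
    (hcycle : factorAt w i n = factorAt w j n)
    (h : ∀ z, i ≤ z → z < j → ¬RightSpecial w (factorAt w z n)) : UltimatelyPeriodic w := by
  obtain ⟨P, rfl⟩ := Nat.exists_eq_add_of_le hij.le
  have hP : 0 < P := by omega
  have key (k : ℕ) : factorAt w (i + k) n = factorAt w (i + k + P) n ∧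
      ¬RightSpecial w (factorAt w (i + k) n) := by
    induction k using Nat.strong_induction_on with
    | _ k ih =>
      constructor
      · cases k with
        | zero => exact hcycle
        | succ k =>
          obtain ⟨heq, hnot⟩ := ih k k.lt_succ_self
          have := factorAt_succ_eq_of_not_rightSpecial hnot heq
          rwa [show i + (k + 1) = i + k + 1 by omega, Nat.add_right_comm _ 1 P]
      · rcases lt_or_ge k P with hk | hk
        · exact h _ (by omega) (by omega)
        · obtain ⟨heq, hnot⟩ := ih (k - P) (by omega)
          rwa [heq, show i + (k - P) + P = i + k by omega] at hnot
  refine ultimatelyPeriodic_iff.2 ⟨i + n, P, hP, fun k => ?_⟩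
  have := apply_add_eq_of_not_rightSpecial (key k).2 (key k).1
  rw [show i + n + (k + P) = i + k + P + n by omega, show i + n + k = i + k + n by omega, this]

theorem finite_factorsOfLength_of_le {m n : ℕ} (hn : (factorsOfLength w n).Finite) (h : m ≤ n) :
    (factorsOfLength w m).Finite := by
  refine (hn.image (List.take m)).subset ?_
  rw [factorsOfLength_eq_range]
  rintro _ ⟨i, rfl⟩
  refine ⟨factorAt w i n, factorAt_mem_factorsOfLength w i n, ?_⟩
  simpa using (List.prefix_iff_eq_take.1 (factorAt_prefix w i h)).symm

theorem ncard_factorsOfLength_add_ncard_rightSpecial_le {n : ℕ}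
    (hfin : (factorsOfLength w (n + 1)).Finite) :
    (factorsOfLength w n).ncard + {u | RightSpecial w u ∧ u.length = n}.ncard ≤
      (factorsOfLength w (n + 1)).ncard := by
  set S := {u | RightSpecial w u ∧ u.length = n}
  have htwo : ∀ u ∈ S, ∃ x ∈ factorsOfLength w (n + 1), ∃ y ∈ factorsOfLength w (n + 1),
      x ≠ y ∧ x.dropLast = u ∧ y.dropLast = u := by
    rintro u ⟨⟨a, b, hab, ha, hb⟩, hu⟩
    exact ⟨u ++ [a], ⟨ha, by simp [hu]⟩, u ++ [b], ⟨hb, by simp [hu]⟩, by simpa using hab,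
      List.dropLast_concat, List.dropLast_concat⟩
  choose! x hx y hy hxy hxu hyu using htwo
  have hinj : S.InjOn x := fun u hu v hv huv => by rw [← hxu u hu, huv, hxu v hv]
  have hsub : x '' S ⊆ factorsOfLength w (n + 1) := Set.image_subset_iff.2 hx
  have hcover : factorsOfLength w n ⊆ List.dropLast '' (factorsOfLength w (n + 1) \ x '' S) := by
    rintro u ⟨hu, hlen⟩
    by_cases huS : u ∈ S
    · refine ⟨y u, ⟨hy u huS, ?_⟩, hyu u huS⟩
      rintro ⟨v, hv, hvu⟩
      have : v = u := by rw [← hxu v hv, hvu, hyu u huS]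
      exact hxy u huS (this ▸ hvu)
    · obtain ⟨a, ha⟩ := hu.exists_append_singleton
      refine ⟨u ++ [a], ⟨⟨ha, by simp [hlen]⟩, ?_⟩, List.dropLast_concat⟩
      rintro ⟨v, hv, hvu⟩
      have : v = u := by rw [← hxu v hv, hvu, List.dropLast_concat]
      exact huS (this ▸ hv)
  calc (factorsOfLength w n).ncard + S.ncard
      ≤ (factorsOfLength w (n + 1) \ x '' S).ncard + S.ncard :=
        Nat.add_le_add_right ((Set.ncard_le_ncard hcover (hfin.sdiff.image _)).trans
          (Set.ncard_image_le hfin.sdiff)) _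
    _ = (factorsOfLength w (n + 1) \ x '' S).ncard + (x '' S).ncard := by
        rw [hinj.ncard_image]
    _ = (factorsOfLength w (n + 1)).ncard := Set.ncard_sdiff_add_ncard_of_subset hsub hfin

theorem exists_rightSpecial_of_not_ultimatelyPeriodic (hw : ¬UltimatelyPeriodic w) {n : ℕ}
    (hfin : (factorsOfLength w n).Finite) : ∃ u, RightSpecial w u ∧ u.length = n := by
  by_contra! hnot
  obtain ⟨i, j, hij, heq⟩ := Set.Finite.exists_lt_map_eq_of_forall_mem
    (fun i => factorAt_mem_factorsOfLength w i n) hfin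
  exact hw (ultimatelyPeriodic_of_factorAt_eq hij heq fun z _ _ hz =>
    hnot _ hz (length_factorAt w z n))

theorem lt_ncard_factorsOfLength_of_not_ultimatelyPeriodic (hw : ¬UltimatelyPeriodic w) {n : ℕ}
    (hfin : (factorsOfLength w n).Finite) : n < (factorsOfLength w n).ncard := by
  induction n with
  | zero => exact (Set.ncard_pos hfin).2 ⟨_, factorAt_mem_factorsOfLength w 0 0⟩
  | succ n ih =>
    have hfin' := finite_factorsOfLength_of_le hfin n.le_succ
    have hspecial : 0 < {u | RightSpecial w u ∧ u.length = n}.ncard :=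
      (Set.ncard_pos (hfin'.subset fun u hu => ⟨hu.1.isFactorInf, hu.2⟩)).2
        (exists_rightSpecial_of_not_ultimatelyPeriodic hw hfin')
    have hle := ncard_factorsOfLength_add_ncard_rightSpecial_le hfin
    have := ih hfin'
    omega

namespace Sturmian

theorem ncard_factorsOfLength (hw : Sturmian w) (n : ℕ) : (factorsOfLength w n).ncard = n + 1 :=
  hw n

theorem finite_factorsOfLength (hw : Sturmian w) (n : ℕ) : (factorsOfLength w n).Finite :=
  Set.finite_of_ncard_ne_zero (by rw [hw.ncard_factorsOfLength]; exact n.succ_ne_zero)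

theorem not_ultimatelyPeriodic (hw : Sturmian w) : ¬UltimatelyPeriodic w := by
  intro h
  obtain ⟨C, hC⟩ := h.exists_ncard_factorsOfLength_le
  have := hC C
  rw [hw.ncard_factorsOfLength] at this
  omega

theorem eq_of_rightSpecial (hw : Sturmian w) (hu : RightSpecial w u) (hv : RightSpecial w v)
    (h : u.length = v.length) : u = v := by
  have hfin : {x | RightSpecial w x ∧ x.length = v.length}.Finite :=
    (hw.finite_factorsOfLength v.length).subset fun x hx => ⟨hx.1.isFactorInf, hx.2⟩
  have hle := ncard_factorsOfLength_add_ncard_rightSpecial_le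
    (hw.finite_factorsOfLength (v.length + 1))
  rw [hw.ncard_factorsOfLength, hw.ncard_factorsOfLength] at hle
  exact (Set.ncard_le_one hfin).1 (by omega) u ⟨hu, h⟩ v ⟨hv, rfl⟩

theorem letter_eq_or_eq_of_ne (hw : Sturmian w) {a b c : A} (ha : IsFactorInf w [a])
    (hb : IsFactorInf w [b]) (hc : IsFactorInf w [c]) (hab : a ≠ b) : c = a ∨ c = b := by
  have hsub : ({[a], [b]} : Set (List A)) ⊆ factorsOfLength w 1 := by
    rintro _ (rfl | rfl)
    exacts [⟨ha, rfl⟩, ⟨hb, rfl⟩]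
  have heq := Set.eq_of_subset_of_ncard_le hsub
    (by rw [hw.ncard_factorsOfLength, Set.ncard_pair (by simpa using hab)])
    (hw.finite_factorsOfLength 1)
  have hmem : [c] ∈ ({[a], [b]} : Set (List A)) := heq ▸ ⟨hc, rfl⟩
  simpa using hmem

theorem isFactorInf_shift (hw : Sturmian w) (N : ℕ) (hu : IsFactorInf w u) :
    IsFactorInf (fun k => w (N + k)) u := by
  have hsub : factorsOfLength (fun k => w (N + k)) u.length ⊆ factorsOfLength w u.length := by
    rw [factorsOfLength_eq_range]
    rintro _ ⟨i, rfl⟩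
    dsimp only
    rw [factorAt_shift]
    exact factorAt_mem_factorsOfLength w (N + i) _
  have hfin := hw.finite_factorsOfLength u.length
  have hlt := lt_ncard_factorsOfLength_of_not_ultimatelyPeriodic
    (mt UltimatelyPeriodic.of_shift hw.not_ultimatelyPeriodic) (hfin.subset hsub)
  have heq := Set.eq_of_subset_of_ncard_le hsub (by rwa [hw.ncard_factorsOfLength]) hfin
  exact (heq.symm.subset ⟨hu, rfl⟩).1

theorem exists_isFactorInf_cons (hw : Sturmian w) (hu : IsFactorInf w u) :
    ∃ a, IsFactorInf w (a :: u) := by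
  obtain ⟨i, hi⟩ := isFactorInf_iff.1 (hw.isFactorInf_shift 1 hu)
  rw [factorAt_shift, Nat.add_comm] at hi
  exact ⟨w i, isFactorInf_iff.2 ⟨i, factorAt_eq_cons_iff.2 ⟨rfl, hi⟩⟩⟩

end Sturmian

theorem eq_of_palindrome_append_cons {p q : List A} {a b : A}
    (hpal : (p ++ a :: q).reverse = p ++ a :: q) (h : q ++ [b] <+: p ++ a :: q) : a = b := by
  have ha : q.reverse ++ [a] <+: p ++ a :: q := by
    rw [← hpal]
    simp
  have heq := List.prefix_of_prefix_length_le ha h (by simp)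
  have := heq.eq_of_length (by simp)
  simpa using (List.append_inj' this rfl).2

theorem factorAt_ne_cons_of_palindrome {a b : A} {j z : ℕ} (hpal : u.reverse = u) (hab : a ≠ b)
    (hj : factorAt w j (b :: u ++ [b]).length = b :: u ++ [b]) (hjz : j ≤ z)
    (hz : z ≤ j + u.length + 1) : factorAt w z (a :: u).length ≠ a :: u := by
  intro h
  rw [factorAt_eq_append_iff, factorAt_eq_cons_iff] at hj
  obtain ⟨⟨hfirst, hu⟩, hlast⟩ := hj
  replace hlast : w (j + u.length + 1) = b := by
    simpa [factorAt_one, Nat.add_assoc] using hlast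
  obtain ⟨hza, hzu⟩ := factorAt_eq_cons_iff.1 h
  obtain rfl | rfl | ⟨hjz, hz⟩ : z = j ∨ z = j + u.length + 1 ∨ j < z ∧ z < j + u.length + 1 := by
    omega
  · exact hab (hza.symm.trans hfirst)
  · exact hab (hza.symm.trans hlast)
  obtain ⟨c, rfl⟩ := Nat.exists_eq_add_of_lt hjz
  obtain ⟨d, hd⟩ : ∃ d, u.length = c + (d + 1) := ⟨u.length - c - 1, by omega⟩
  -- `a :: u` overlaps `b :: u ++ [b]` in `a :: q ++ [b]`, where `q` has length `d`.
  have hsplit : u = factorAt w (j + 1) c ++ a :: factorAt w (j + c + 1 + 1) d := by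
    rw [← hu, hd, factorAt_add, factorAt_succ', Nat.add_right_comm j 1 c, hza]
  have hprefix : factorAt w (j + c + 1 + 1) d ++ [b] <+: u := by
    rw [show j + u.length + 1 = j + c + 1 + 1 + d by omega] at hlast
    rw [← hlast, ← factorAt_succ, ← hzu]
    exact factorAt_prefix w _ (by omega)
  rw [hsplit] at hpal hprefix
  exact hab (eq_of_palindrome_append_cons hpal hprefix)

namespace Sturmian

theorem eq_cons_of_rightSpecial (hw : Sturmian w) {a b : A} (hab : a ≠ b)
    (hu : RightSpecial w u) (ha : IsFactorInf w (a :: u)) (hb : IsFactorInf w (b :: u))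
    (hbu : ¬RightSpecial w (b :: u)) (hv : RightSpecial w v) (hlen : v.length = u.length + 1) :
    v = a :: u := by
  obtain ⟨c, v, rfl⟩ := List.exists_cons_of_length_eq_add_one hlen
  obtain rfl : v = u :=
    hw.eq_of_rightSpecial (hv.of_isSuffix (List.suffix_cons c v)) hu (by simpa using hlen)
  have hc := hw.letter_eq_or_eq_of_ne (ha.singleton_of_mem List.mem_cons_self)
    (hb.singleton_of_mem List.mem_cons_self)
    (hv.isFactorInf.singleton_of_mem List.mem_cons_self) hab
  rcases hc with rfl | rfl
  · rfl
  · exact absurd hv hbu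

theorem palindromic_extension_unique_of_not_rightSpecial (hw : Sturmian w) {a b : A}
    (hpal : u.reverse = u) (ha : IsFactorInf w (a :: u ++ [a])) (hb : IsFactorInf w (b :: u ++ [b]))
    (hbu : ¬RightSpecial w (b :: u)) : a = b := by
  by_contra hab
  have hau : IsFactorInf w (a :: u) := ha.of_isInfix (List.prefix_append _ _).isInfix
  have hu : RightSpecial w u := ⟨a, b, hab, ha.of_isInfix (List.suffix_cons _ _).isInfix,
    hb.of_isInfix (List.suffix_cons _ _).isInfix⟩
  obtain ⟨j, hj⟩ := isFactorInf_iff.1 hb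
  set I := Set.Icc j (j + u.length + 1)
  have hne : ∀ z ∈ I, factorAt w z (u.length + 1) ≠ a :: u := fun z hz =>
    factorAt_ne_cons_of_palindrome hpal hab hj hz.1 hz.2
  have hnot : ∀ z ∈ I, ¬RightSpecial w (factorAt w z (u.length + 1)) := fun z hz hspecial =>
    hne z hz (hw.eq_cons_of_rightSpecial hab hu hau
      (hb.of_isInfix (List.prefix_append _ _).isInfix) hbu hspecial (length_factorAt ..))
  have hcard : (factorsOfLength w (u.length + 1) \ {a :: u}).ncard < I.ncard := by
    have := Set.ncard_sdiff_singleton_add_one (show a :: u ∈ factorsOfLength w (u.length + 1)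
      from ⟨hau, rfl⟩) (hw.finite_factorsOfLength _)
    rw [hw.ncard_factorsOfLength] at this
    rw [show I = Finset.Icc j (j + u.length + 1) from (Finset.coe_Icc _ _).symm,
      Set.ncard_coe_finset, Nat.card_Icc]
    omega
  obtain ⟨x, hx, y, hy, hxy, heq⟩ := Set.exists_ne_map_eq_of_ncard_lt_of_maps_to hcard
    (fun z hz => ⟨factorAt_mem_factorsOfLength w z _, hne z hz⟩)
    (hw.finite_factorsOfLength _).sdiff
  wlog hlt : x < y generalizing x y
  · exact this y hy x hx hxy.symm heq.symm (by omega)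
  exact hw.not_ultimatelyPeriodic (ultimatelyPeriodic_of_factorAt_eq hlt heq fun z hxz hzy =>
    hnot z ⟨hx.1.trans hxz, hzy.le.trans hy.2⟩)

theorem palindromic_extension_unique (hw : Sturmian w) {a b : A} (hpal : u.reverse = u)
    (ha : IsFactorInf w (a :: u ++ [a])) (hb : IsFactorInf w (b :: u ++ [b])) : a = b := by
  by_cases hbu : RightSpecial w (b :: u)
  · by_cases hau : RightSpecial w (a :: u)
    · exact (List.cons.inj (hw.eq_of_rightSpecial hau hbu rfl)).1
    · exact (hw.palindromic_extension_unique_of_not_rightSpecial hpal hb ha hau).symm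
  · exact hw.palindromic_extension_unique_of_not_rightSpecial hpal ha hb hbu

theorem isFactorInf_reverse_cons_append (hw : Sturmian w) {c d : A}
    (hrev : ∀ v, v.length = u.length + 1 → IsFactorInf w v → IsFactorInf w v.reverse)
    (h : IsFactorInf w (c :: u ++ [d])) : IsFactorInf w (d :: u.reverse ++ [c]) := by
  by_contra hnot
  have hcu : IsFactorInf w (c :: u) := h.of_isInfix ⟨[], [d], by simp⟩
  have hud : IsFactorInf w (u ++ [d]) := h.of_isInfix ⟨[c], [], by simp⟩
  have hcu' : IsFactorInf w (u.reverse ++ [c]) := by simpa using hrev _ (by simp) hcu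
  have hud' : IsFactorInf w (d :: u.reverse) := by simpa using hrev _ (by simp) hud
  obtain ⟨e, he⟩ := hw.exists_isFactorInf_cons hcu'
  obtain ⟨f, hf⟩ := hud'.exists_append_singleton
  have hed : e ≠ d := fun h => hnot (by simpa [h] using he)
  have hfc : f ≠ c := fun h => hnot (by simpa [h] using hf)
  have hu' : RightSpecial w u.reverse := ⟨f, c, hfc, hf.of_isInfix ⟨[d], [], by simp⟩, hcu'⟩
  have hu : RightSpecial w u := by
    refine ⟨e, d, hed, ?_, hud⟩
    simpa using hrev (e :: u.reverse) (by simp) (he.of_isInfix ⟨[], [c], by simp⟩)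
  have hpal : u.reverse = u := hw.eq_of_rightSpecial hu' hu (by simp)
  rw [hpal] at hnot he hf
  have hcd : c ≠ d := by
    rintro rfl
    exact hnot h
  have hc := h.singleton_of_mem (a := c) (by simp)
  have hd := h.singleton_of_mem (a := d) (by simp)
  have hec : e = c :=
    (hw.letter_eq_or_eq_of_ne hc hd (he.singleton_of_mem (by simp)) hcd).resolve_right hed
  have hfd : f = d :=
    (hw.letter_eq_or_eq_of_ne hc hd (hf.singleton_of_mem (by simp)) hcd).resolve_left hfc
  subst hec hfd
  exact hcd (hw.palindromic_extension_unique hpal (by simpa using he) hf)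

theorem isFactorInf_reverse (hw : Sturmian w) (hu : IsFactorInf w u) :
    IsFactorInf w u.reverse := by
  induction h : u.length using Nat.strong_induction_on generalizing u with
  | _ n ih =>
    induction u using List.bidirectionalRec with
    | nil => exact hu
    | singleton a => exact hu
    | cons_append c v d =>
      have hrev : ∀ x, x.length = v.length + 1 → IsFactorInf w x → IsFactorInf w x.reverse :=
        fun x hx hxw => ih x.length (by simp at h; omega) hxw rfl
      simpa using hw.isFactorInf_reverse_cons_append hrev hu

end Sturmian

theorem le_and_take_drop_eq_iff {i : ℕ} :
    (i + u.length ≤ v.length ∧ (v.drop i).take u.length = u) ↔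
      ∃ s t, v = s ++ u ++ t ∧ s.length = i := by
  constructor
  · rintro ⟨hi, hu⟩
    have hdrop := List.take_append_drop u.length (v.drop i)
    rw [hu] at hdrop
    exact ⟨v.take i, (v.drop i).drop u.length,
      by rw [List.append_assoc, hdrop, List.take_append_drop],
      List.length_take_of_le (Nat.le_of_add_right_le hi)⟩
  · rintro ⟨s, t, rfl, rfl⟩
    simp

theorem IsCompleteFirstReturn.ne (h : IsCompleteFirstReturn v u) : u ≠ v := by
  rintro rfl
  have hsub : {i | i + u.length ≤ u.length ∧ (u.drop i).take u.length = u} ⊆ {0} := by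
    rintro i ⟨hi, -⟩
    simpa using hi
  have hcard := (Set.ncard_le_ncard hsub).trans_eq (Set.ncard_singleton 0)
  have htwo := h.2.2
  unfold occCount at htwo
  omega

theorem isCompleteFirstReturn_iff :
    IsCompleteFirstReturn v u ↔
      u <+: v ∧ u <:+ v ∧ u ≠ v ∧ ∀ s t, v = s ++ u ++ t → s = [] ∨ t = [] := by
  let O := {i | i + u.length ≤ v.length ∧ (v.drop i).take u.length = u}
  have hends (hpre : u <+: v) (hsuf : u <:+ v) : {0, v.length - u.length} ⊆ O := by
    rintro _ (rfl | rfl)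
    · obtain ⟨t, ht⟩ := hpre
      exact le_and_take_drop_eq_iff.2 ⟨[], t, ht.symm, rfl⟩
    · obtain ⟨s, hs⟩ := hsuf
      exact le_and_take_drop_eq_iff.2 ⟨s, [], by simp [hs], by simp [← hs]⟩
  have hpair (hpre : u <+: v) (hne : u ≠ v) : ({0, v.length - u.length} : Set ℕ).ncard = 2 :=
    Set.ncard_pair fun h => hne (hpre.eq_of_length_le (by omega))
  constructor
  · intro h
    refine ⟨h.1, h.2.1, h.ne, fun s t hst => ?_⟩
    have hfin : O.Finite := (Set.finite_Iic v.length).subset fun i hi => Nat.le_of_add_right_le hi.1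
    have heq : {0, v.length - u.length} = O := Set.eq_of_subset_of_ncard_le (hends h.1 h.2.1)
      (h.2.2.trans (hpair h.1 h.ne).symm).le hfin
    have hlen : v.length = s.length + u.length + t.length := by simp [hst, Nat.add_assoc]
    rcases heq.symm.subset (le_and_take_drop_eq_iff.2 ⟨s, t, hst, rfl⟩) with hs | hs
    · exact Or.inl (List.length_eq_zero_iff.1 hs)
    · rw [Set.mem_singleton_iff] at hs
      exact Or.inr (List.length_eq_zero_iff.1 (by omega))
  · rintro ⟨hpre, hsuf, hne, h⟩
    refine ⟨hpre, hsuf, ?_⟩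
    have heq : O = {0, v.length - u.length} := by
      refine Set.Subset.antisymm (fun i hi => ?_) (hends hpre hsuf)
      obtain ⟨s, t, hst, rfl⟩ := le_and_take_drop_eq_iff.1 hi
      rcases h s t hst with rfl | rfl
      · exact Or.inl rfl
      · exact Or.inr (by simp [hst])
    exact (congrArg Set.ncard heq).trans (hpair hpre hne)

namespace IsCompleteFirstReturn

theorem eq_nil_or_eq_nil (h : IsCompleteFirstReturn v u) {s t : List A} (hst : v = s ++ u ++ t) :
    s = [] ∨ t = [] :=
  (isCompleteFirstReturn_iff.1 h).2.2.2 s t hst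

theorem reverse (h : IsCompleteFirstReturn v u) :
    IsCompleteFirstReturn v.reverse u.reverse := by
  refine isCompleteFirstReturn_iff.2 ⟨List.reverse_prefix.2 h.2.1, List.reverse_suffix.2 h.1,
    List.reverse_injective.ne h.ne, fun s t hst => ?_⟩
  have hst' : v = t.reverse ++ u ++ s.reverse := by
    rw [← List.reverse_reverse v, hst]
    simp
  simpa using (h.eq_nil_or_eq_nil hst').symm

theorem cons_append_singleton (h : IsCompleteFirstReturn v u) {a b : A}
    (hpre : a :: u ++ [b] <+: a :: v ++ [b]) (hsuf : a :: u ++ [b] <:+ a :: v ++ [b]) :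
    IsCompleteFirstReturn (a :: v ++ [b]) (a :: u ++ [b]) := by
  refine isCompleteFirstReturn_iff.2 ⟨hpre, hsuf, by simpa using h.ne, fun s t hst => ?_⟩
  by_contra! hne
  obtain ⟨x, s, rfl⟩ := List.exists_cons_of_ne_nil hne.1
  obtain ⟨t, y, rfl⟩ := (List.eq_nil_or_concat' t).resolve_left hne.2
  have hv : v = (s ++ [a]) ++ u ++ (b :: t) := by
    have : v ++ [b] = (s ++ [a] ++ u ++ (b :: t)) ++ [y] := by simpa using (List.cons.inj hst).2
    exact (List.append_inj' this rfl).1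
  simpa using h.eq_nil_or_eq_nil hv

theorem factorAt_ne (h : IsCompleteFirstReturn v u) {i z : ℕ}
    (hv : factorAt w i v.length = v) (hiz : i < z) (hz : z + u.length < i + v.length) :
    factorAt w z u.length ≠ u := by
  intro hu
  have hlen : v.length = (z - i) + (u.length + (i + v.length - (z + u.length))) := by omega
  have hsplit : v = factorAt w i (z - i) ++ u ++
      factorAt w (z + u.length) (i + v.length - (z + u.length)) := by
    conv_lhs => rw [← hv, hlen, factorAt_add, factorAt_add, Nat.add_sub_of_le hiz.le, hu]
    rw [List.append_assoc]
  rcases h.eq_nil_or_eq_nil hsplit with hs | ht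
  · have := congrArg List.length hs
    simp only [length_factorAt, List.length_nil] at this
    omega
  · have := congrArg List.length ht
    simp only [length_factorAt, List.length_nil] at this
    omega

end IsCompleteFirstReturn

theorem exists_mismatch_of_reverse_ne (h : v.reverse ≠ v) :
    ∃ x y a b, a ≠ b ∧ v = x ++ a :: (y ++ b :: x.reverse) := by
  induction v using List.bidirectionalRec with
  | nil => exact absurd rfl h
  | singleton a => exact absurd rfl h
  | cons_append c v d ih =>
    by_cases hcd : c = d
    · obtain ⟨x, y, a, b, hab, rfl⟩ := ih fun hv => h (by simp [hcd, hv])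
      exact ⟨c :: x, y, a, b, hab, by simp [hcd]⟩
    · exact ⟨[], v, c, d, hcd, rfl⟩

theorem length_le_of_mismatch {x y : List A} {a b : A} (hab : a ≠ b) (hpal : u.reverse = u)
    (hpre : u <+: x ++ a :: (y ++ b :: x.reverse))
    (hsuf : u <:+ x ++ a :: (y ++ b :: x.reverse)) : u.length ≤ x.length := by
  by_contra! hlt
  have ha : x ++ [a] <+: u := List.prefix_of_prefix_length_le
    ⟨y ++ b :: x.reverse, by simp⟩ hpre (by simpa using hlt)
  have hb' : b :: x.reverse <:+ u := List.suffix_of_suffix_length_le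
    ⟨x ++ a :: y, by simp⟩ hsuf (by simpa using hlt)
  have hb : x ++ [b] <+: u := by simpa [hpal] using List.reverse_prefix.2 hb'
  have heq := (List.prefix_of_prefix_length_le ha hb (by simp)).eq_of_length (by simp)
  exact hab (by simpa using heq)

namespace Sturmian

theorem isFactorInf_append_singleton_of_rightSpecial (hw : Sturmian w) {c : A}
    (hu : RightSpecial w u) (hc : IsFactorInf w [c]) : IsFactorInf w (u ++ [c]) := by
  obtain ⟨a, b, hab, ha, hb⟩ := hu
  rcases hw.letter_eq_or_eq_of_ne (ha.singleton_of_mem (by simp)) (hb.singleton_of_mem (by simp))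
    hc hab with rfl | rfl
  exacts [ha, hb]

theorem isFactorInf_of_isCompleteFirstReturn (hw : Sturmian w) {y : List A} {a b : A}
    (hab : a ≠ b) (hu : RightSpecial w u) (hv : IsFactorInf w (u ++ a :: (y ++ b :: u)))
    (hret : IsCompleteFirstReturn (u ++ a :: (y ++ b :: u)) u) :
    IsFactorInf w (b :: u ++ [b]) := by
  by_contra hbub
  have ha := hv.singleton_of_mem (a := a) (by simp)
  have hb := hv.singleton_of_mem (a := b) (by simp)
  have hbu : ¬RightSpecial w (b :: u) := fun h =>
    hbub (hw.isFactorInf_append_singleton_of_rightSpecial h hb)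
  obtain ⟨i, hi⟩ := isFactorInf_iff.1 hv
  have hocc := hi
  simp only [factorAt_eq_append_iff, factorAt_eq_cons_iff] at hocc
  obtain ⟨hiu, hia, -, hjb, hju⟩ := hocc
  set j := i + u.length + 1 + y.length
  have hja : w (j + 1 + u.length) = a := by
    have hc : IsFactorInf w (b :: u ++ [w (j + 1 + u.length)]) := by
      have := isFactorInf_factorAt w j (u.length + 1 + 1)
      rwa [factorAt_succ, factorAt_succ', hjb, hju,
        show j + (u.length + 1) = j + 1 + u.length by omega] at this
    refine (hw.letter_eq_or_eq_of_ne ha hb (hc.singleton_of_mem (by simp)) hab).resolve_right ?_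
    intro h
    exact hbub (h ▸ hc)
  have hcycle : factorAt w i (u.length + 1) = factorAt w (j + 1) (u.length + 1) := by
    rw [factorAt_succ, factorAt_succ, hiu, hia, hju, hja]
  refine hw.not_ultimatelyPeriodic (ultimatelyPeriodic_of_factorAt_eq (by omega) hcycle ?_)
  intro z hiz hzj hz
  rw [factorAt_succ'] at hz
  have hzu : factorAt w (z + 1) u.length = u :=
    hw.eq_of_rightSpecial (hz.of_isSuffix (List.suffix_cons _ _)) hu (length_factorAt ..)
  obtain rfl | hlt := (Nat.lt_succ_iff.1 hzj).eq_or_lt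
  · rw [hjb, hju] at hz
    exact hbu hz
  · exact hret.factorAt_ne hi (Nat.lt_succ_of_le hiz) (by simp; omega) hzu

theorem rightSpecial_of_mismatch (hw : Sturmian w) {x y : List A} {a b : A} (hab : a ≠ b)
    (hv : IsFactorInf w (x ++ a :: (y ++ b :: x.reverse))) : RightSpecial w x := by
  refine ⟨a, b, hab, hv.of_isInfix ⟨[], y ++ b :: x.reverse, by simp⟩, ?_⟩
  have hb : IsFactorInf w (b :: x.reverse) := hv.of_isInfix ⟨x ++ a :: y, [], by simp⟩
  simpa using hw.isFactorInf_reverse hb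

theorem eq_of_isCompleteFirstReturn_of_rightSpecial (hw : Sturmian w) {x y : List A} {a b : A}
    (hpal : u.reverse = u) (hu : RightSpecial w u)
    (hv : IsFactorInf w (x ++ a :: (y ++ b :: x.reverse)))
    (hret : IsCompleteFirstReturn (x ++ a :: (y ++ b :: x.reverse)) u) : a = b := by
  by_contra hab
  have hlen := length_le_of_mismatch hab hpal hret.1 hret.2.1
  have hx := hw.rightSpecial_of_mismatch hab hv
  obtain ⟨s, t, rfl, ht⟩ : ∃ s t, x = s ++ t ∧ t.length = u.length :=
    ⟨x.take (x.length - u.length), x.drop (x.length - u.length),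
      (List.take_append_drop ..).symm, by simp; omega⟩
  obtain rfl : t = u := hw.eq_of_rightSpecial (hx.of_isSuffix (List.suffix_append s t)) hu ht
  obtain rfl : s = [] := (hret.eq_nil_or_eq_nil rfl).resolve_right (by simp)
  rw [List.nil_append, hpal] at hv hret
  have hret' := hret.reverse
  have hb := hw.isFactorInf_of_isCompleteFirstReturn hab hu hv hret
  have hrev : (t ++ a :: (y ++ b :: t)).reverse = t ++ b :: (y.reverse ++ a :: t) := by simp [hpal]
  have ha := hw.isFactorInf_of_isCompleteFirstReturn (Ne.symm hab) hu
    (hrev ▸ hw.isFactorInf_reverse hv) (by rwa [hrev, hpal] at hret')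
  exact hab (hw.palindromic_extension_unique hpal ha hb)

theorem isFactorInf_cons_append_singleton_of_not_rightSpecial (hw : Sturmian w) {c : A}
    (hpal : u.reverse = u) (hu : ¬RightSpecial w u) (hv : IsFactorInf w v)
    (hpre : u ++ [c] <+: v) (hsuf : c :: u <:+ v) : IsFactorInf w (c :: v ++ [c]) := by
  obtain ⟨e, he⟩ := hw.exists_isFactorInf_cons hv
  obtain ⟨f, hf⟩ := he.exists_append_singleton
  have huniq {d : A} (hd : IsFactorInf w (u ++ [d])) : d = c :=
    by_contra fun hdc => hu ⟨d, c, hdc, hd, hv.of_isInfix hpre.isInfix⟩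
  obtain ⟨s, hs⟩ := (List.suffix_cons c u).trans hsuf
  obtain ⟨t, ht⟩ := (List.prefix_append u [c]).trans hpre
  have hfu : IsFactorInf w (u ++ [f]) := hf.of_isInfix ⟨e :: s, [], by simp [← hs]⟩
  have heu : IsFactorInf w (e :: u) := hf.of_isInfix ⟨[], t ++ [f], by simp [← ht]⟩
  obtain rfl := huniq hfu
  obtain rfl := huniq (d := e) (by simpa [hpal] using hw.isFactorInf_reverse heu)
  exact hf

theorem eq_of_isCompleteFirstReturn (hw : Sturmian w) {x y : List A} {a b : A}
    (hpal : u.reverse = u) (hv : IsFactorInf w (x ++ a :: (y ++ b :: x.reverse)))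
    (hret : IsCompleteFirstReturn (x ++ a :: (y ++ b :: x.reverse)) u) : a = b := by
  induction h : x.length - u.length using Nat.strong_induction_on generalizing x u with
  | _ n ih =>
    by_cases hu : RightSpecial w u
    · exact hw.eq_of_isCompleteFirstReturn_of_rightSpecial hpal hu hv hret
    by_contra hab
    have hlen := length_le_of_mismatch hab hpal hret.1 hret.2.1
    obtain ⟨x', rfl⟩ : u <+: x :=
      List.prefix_of_prefix_length_le hret.1 (List.prefix_append ..) hlen
    obtain ⟨c, x', rfl⟩ := List.exists_cons_of_ne_nil (l := x') <| by
      rintro rfl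
      exact hu (by simpa using hw.rightSpecial_of_mismatch hab hv)
    have hcv := hw.isFactorInf_cons_append_singleton_of_not_rightSpecial (c := c) hpal hu hv
      ⟨x' ++ a :: (y ++ b :: (u ++ c :: x').reverse), by simp⟩
      ⟨u ++ c :: x' ++ a :: (y ++ b :: x'.reverse), by simp [hpal]⟩
    have hcret := hret.cons_append_singleton (a := c) (b := c)
      ⟨x' ++ a :: (y ++ b :: (c :: (u ++ c :: x')).reverse), by simp⟩
      ⟨c :: (u ++ c :: x' ++ a :: (y ++ b :: x'.reverse)), by simp [hpal]⟩
    refine hab (ih _ ?_ (u := c :: u ++ [c]) (x := c :: (u ++ c :: x')) (by simp [hpal])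
      (by simpa using hcv) (by simpa using hcret) rfl)
    simp only [List.length_append, List.length_cons, List.length_nil] at h ⊢
    omega

theorem reverse_eq_of_isCompleteFirstReturn (hw : Sturmian w) (hpal : u.reverse = u)
    (hv : IsFactorInf w v) (hret : IsCompleteFirstReturn v u) : v.reverse = v := by
  by_contra hne
  obtain ⟨x, y, a, b, hab, rfl⟩ := exists_mismatch_of_reverse_ne hne
  exact hab (hw.eq_of_isCompleteFirstReturn hpal hv hret)

end Sturmian

/-- The set of palindromic factors of `x`, whose size decides whether `x` is rich. -/
def palindromicFactors (x : List A) : Set (List A) := {u | u <:+: x ∧ u.reverse = u}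

theorem finite_setOf_isInfix (x : List A) : {u | u <:+: x}.Finite :=
  (List.finite_toSet x.sublists).subset fun _ hu => List.mem_sublists.2 hu.sublist

theorem exists_longest_palindrome_isSuffix (x : List A) :
    ∃ p, p <:+ x ∧ p.reverse = p ∧ ∀ q, q <:+ x → q.reverse = q → q.length ≤ p.length := by
  obtain ⟨p, ⟨hp, hpal⟩, hmax⟩ := Set.exists_max_image {q | q <:+ x ∧ q.reverse = q} List.length
    ((finite_setOf_isInfix x).subset fun _ hq => hq.1.isInfix) ⟨[], List.nil_suffix, rfl⟩
  exact ⟨p, hp, hpal, fun q hq hqpal => hmax q ⟨hq, hqpal⟩⟩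

theorem isInfix_of_palindrome_isSuffix_of_lt {x p q : List A} {a : A} (hp : p <:+ x ++ [a])
    (hppal : p.reverse = p) (hq : q <:+ x ++ [a]) (hqpal : q.reverse = q)
    (hlt : q.length < p.length) : q <:+: x := by
  have hqp : q <+: p := by
    simpa [hppal, hqpal] using
      List.reverse_prefix.2 (List.suffix_of_suffix_length_le hq hp hlt.le)
  obtain ⟨s, hs⟩ := hp
  obtain ⟨p, b, rfl⟩ := (List.eq_nil_or_concat' p).resolve_left <| by
    rintro rfl
    simp at hlt
  obtain rfl : s ++ p = x := (List.append_inj' ((List.append_assoc ..).trans hs) rfl).1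
  have hqp' : q <+: p := List.prefix_of_prefix_length_le hqp (List.prefix_append p [b])
    (by simpa [Nat.lt_succ_iff] using hlt)
  exact hqp'.isInfix.trans (List.suffix_append s p).isInfix

theorem palindromicFactors_append_singleton {x p : List A} {a : A} (hp : p <:+ x ++ [a])
    (hppal : p.reverse = p) (hmax : ∀ q, q <:+ x ++ [a] → q.reverse = q → q.length ≤ p.length) :
    palindromicFactors (x ++ [a]) = insert p (palindromicFactors x) := by
  ext q
  constructor
  · rintro ⟨hq, hqpal⟩
    rcases List.infix_concat_iff.1 hq with hq | hq
    · rcases (hmax q hq hqpal).eq_or_lt with hlen | hlt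
      · exact Or.inl ((List.suffix_of_suffix_length_le hq hp hlen.le).eq_of_length hlen)
      · exact Or.inr ⟨isInfix_of_palindrome_isSuffix_of_lt hp hppal hq hqpal hlt, hqpal⟩
    · exact Or.inr ⟨hq, hqpal⟩
  · rintro (rfl | ⟨hq, hqpal⟩)
    · exact ⟨hp.isInfix, hppal⟩
    · exact ⟨hq.trans (List.prefix_append x [a]).isInfix, hqpal⟩

theorem exists_isCompleteFirstReturn_isSuffix {t : List A} (hsuf : u <:+ u ++ t) (ht : t ≠ []) :
    ∃ v, v <:+ u ++ t ∧ IsCompleteFirstReturn v u := by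
  induction h : t.length using Nat.strong_induction_on generalizing t with
  | _ n ih =>
    by_cases hret : IsCompleteFirstReturn (u ++ t) u
    · exact ⟨u ++ t, List.suffix_rfl, hret⟩
    obtain ⟨s', t', heq, hs', ht'⟩ : ∃ s' t', u ++ t = s' ++ u ++ t' ∧ s' ≠ [] ∧ t' ≠ [] := by
      by_contra! hall
      refine hret (isCompleteFirstReturn_iff.2 ⟨List.prefix_append u t, hsuf, by simpa using ht,
        fun s' t' heq => or_iff_not_imp_left.2 (hall s' t' heq)⟩)
    have hsuf' : u ++ t' <:+ u ++ t := ⟨s', by rw [heq, List.append_assoc]⟩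
    have hlt : t'.length < n := by
      have := congrArg List.length heq
      have := List.length_pos_iff.2 hs'
      simp only [List.length_append] at *
      omega
    obtain ⟨v, hv, hvret⟩ := ih _ hlt
      (List.suffix_of_suffix_length_le hsuf hsuf' (by simp)) ht' rfl
    exact ⟨v, hv.trans hsuf', hvret⟩

theorem not_isInfix_of_forall_isCompleteFirstReturn {x p : List A} {a : A}
    (h : ∀ v, v <:+ x ++ [a] → IsCompleteFirstReturn v p → v.reverse = v) (hp : p <:+ x ++ [a])
    (hmax : ∀ q, q <:+ x ++ [a] → q.reverse = q → q.length ≤ p.length) : ¬p <:+: x := by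
  rintro ⟨s, t, rfl⟩
  have hsuf : p ++ (t ++ [a]) <:+ s ++ p ++ t ++ [a] := ⟨s, by simp⟩
  obtain ⟨v, hv, hret⟩ := exists_isCompleteFirstReturn_isSuffix
    (List.suffix_of_suffix_length_le hp hsuf (by simp)) (by simp : t ++ [a] ≠ [])
  have hvsuf := hv.trans hsuf
  exact hret.ne (hret.1.eq_of_length_le (hmax v hvsuf (h v hvsuf hret)))

theorem richWord_of_forall_isCompleteFirstReturn {x : List A}
    (h : ∀ u v, v <:+: x → u.reverse = u → IsCompleteFirstReturn v u → v.reverse = v) :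
    RichWord x := by
  change (palindromicFactors x).ncard = x.length + 1
  induction x using List.reverseRecOn with
  | nil =>
    have : palindromicFactors ([] : List A) = {[]} := by
      ext u
      simp +contextual [palindromicFactors]
    rw [this, Set.ncard_singleton, List.length_nil]
  | append_singleton x a ih =>
    obtain ⟨p, hp, hpal, hmax⟩ := exists_longest_palindrome_isSuffix (x ++ [a])
    have hnew : ¬p <:+: x := not_isInfix_of_forall_isCompleteFirstReturn
      (fun v hv => h p v hv.isInfix hpal) hp hmax
    rw [palindromicFactors_append_singleton hp hpal hmax,
      Set.ncard_insert_of_notMem (fun hmem => hnew hmem.1)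
        ((finite_setOf_isInfix x).subset fun _ hu => hu.1),
      ih fun u v hv => h u v (hv.trans (List.prefix_append x [a]).isInfix),
      List.length_append, List.length_singleton]

end

theorem sturmian_is_rich_general {A : Type*} (w : ℕ → A) (hw : Sturmian w) :
    ∀ x : List A, IsFactorInf w x → RichWord x := fun _ hx =>
  richWord_of_forall_isCompleteFirstReturn fun _ _ hv hpal hret =>
    hw.reverse_eq_of_isCompleteFirstReturn hpal (hx.of_isInfix hv) hret

/-- Every Sturmian word is rich, i.e. every factor of a Sturmian word has
the maximum number of distinct palindromic factors. -/
theorem sturmian_is_rich (w : ℕ → Bool) (hw : Sturmian w) :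
    ∀ x : List Bool, IsFactorInf w x → RichWord x :=
  sturmian_is_rich_general w hw
end
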